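/- The triangle with side lengths (195, 275, 245) tiles into 3575 congruent copies of the triangle with side lengths (3, 5, 7). -/

import Mathlib

noncomputable section

abbrev Plane := EuclideanSpace ℝ (Fin 2)

/-- The point (x, y) in the Euclidean plane. -/
def pt (x y : ℝ) : Plane := (WithLp.equiv 2 (Fin 2 → ℝ)).symm ![x, y]

/-- `Δ` is a triangle with side lengths `(p, q, r)`: the convex hull of points `P, Q, R`
with `dist Q R = p`, `dist P R = q`, `dist P Q = r`. -/
def IsTriangle (p q r : ℝ) (Δ : Set Plane) : Prop :=
  ∃ P Q R : Plane, dist Q R = p ∧ dist P R = q ∧ dist P Q = r ∧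
    Δ = convexHull ℝ {P, Q, R}

/-- `S` tiles into `N` congruent copies of the `(p, q, r)` triangle: there are isometries
`f 1, …, f N` of the plane and a triangle `Δ` with side lengths `(p, q, r)` such that
`S` is the union of the `f i '' Δ` and their interiors are pairwise disjoint. -/
def TilesInto (S : Set Plane) (N : ℕ) (p q r : ℝ) : Prop :=
  ∃ (f : Fin N → Plane ≃ᵢ Plane) (Δ : Set Plane),
    IsTriangle p q r Δ ∧
    S = ⋃ i, f i '' Δ ∧
    ∀ i j : Fin N, i ≠ j → interior (f i '' Δ) ∩ interior (f j '' Δ) = ∅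


/-- Generic tilings by sets satisfying a predicate. -/
def Til {X : Type} [TopologicalSpace X] (C : Set X → Prop) (S : Set X) (n : ℕ) : Prop :=
  ∃ T : Fin n → Set X, (∀ i, C (T i)) ∧ S = ⋃ i, T i ∧
    ∀ i j, i ≠ j → interior (T i) ∩ interior (T j) = ∅

theorem Til.map {X Y : Type} [TopologicalSpace X] [TopologicalSpace Y]
    {C : Set X → Prop} {D : Set Y → Prop} (e : X ≃ₜ Y) (h : ∀ T, C T → D (e '' T))
    {S : Set X} {n : ℕ} (hS : Til C S n) : Til D (e '' S) n := by
  obtain ⟨T, h1, h2, h3⟩ := hS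
  refine ⟨fun i => e '' T i, fun i => h _ (h1 i), ?_, ?_⟩
  · rw [h2, Set.image_iUnion]
  · intro i j hij
    rw [← e.image_interior, ← e.image_interior, ← Set.image_inter e.injective, h3 i j hij,
      Set.image_empty]

theorem Til.one {X : Type} [TopologicalSpace X] {C : Set X → Prop} {S : Set X} (h : C S) :
    Til C S 1 := by
  refine ⟨fun _ => S, fun _ => h, ?_, ?_⟩
  · simp [Set.iUnion_const]
  · intro i j hij
    exact absurd (Subsingleton.elim i j) hij

theorem Til.union {X : Type} [TopologicalSpace X] {C : Set X → Prop} {S S₁ S₂ : Set X}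
    {m n : ℕ} (h₁ : Til C S₁ m) (h₂ : Til C S₂ n) (hS : S = S₁ ∪ S₂)
    (hd : interior S₁ ∩ interior S₂ = ∅) : Til C S (m + n) := by
  obtain ⟨T, a1, a2, a3⟩ := h₁
  obtain ⟨U, b1, b2, b3⟩ := h₂
  have key : ∀ i j, interior (T i) ∩ interior (U j) = ∅ := by
    intro i j
    have hT : T i ⊆ S₁ := a2 ▸ Set.subset_iUnion T i
    have hU : U j ⊆ S₂ := b2 ▸ Set.subset_iUnion U j
    exact Set.subset_eq_empty (Set.inter_subset_inter (interior_mono hT) (interior_mono hU)) hd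
  refine ⟨Fin.append T U, ?_, ?_, ?_⟩
  · intro i
    refine Fin.addCases (fun i => ?_) (fun i => ?_) i
    · simpa using a1 i
    · simpa using b1 i
  · rw [hS, a2, b2]
    ext x
    simp only [Set.mem_union, Set.mem_iUnion]
    constructor
    · rintro (⟨i, hi⟩ | ⟨i, hi⟩)
      · exact ⟨Fin.castAdd n i, by simpa using hi⟩
      · exact ⟨Fin.natAdd m i, by simpa using hi⟩
    · rintro ⟨i, hi⟩
      revert hi
      refine Fin.addCases (fun i => ?_) (fun i => ?_) i
      · intro hi
        exact Or.inl ⟨i, by simpa using hi⟩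
      · intro hi
        exact Or.inr ⟨i, by simpa using hi⟩
  · intro i j
    refine Fin.addCases (fun i => ?_) (fun i => ?_) i <;>
    refine Fin.addCases (fun j => ?_) (fun j => ?_) j <;> intro hij
    · simp only [Fin.append_left]
      exact a3 i j (fun h => hij (by rw [h]))
    · simp only [Fin.append_left, Fin.append_right]
      exact key i j
    · simp only [Fin.append_left, Fin.append_right]
      rw [Set.inter_comm]
      exact key j i
    · simp only [Fin.append_right]
      exact b3 i j (fun h => hij (by rw [h]))

theorem sep_interior {S₁ S₂ : Set (ℝ × ℝ)} (a b c : ℝ) (hab : 0 < a ^ 2 + b ^ 2)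
    (h₁ : ∀ z ∈ S₁, a * z.1 + b * z.2 ≤ c) (h₂ : ∀ z ∈ S₂, c ≤ a * z.1 + b * z.2) :
    interior S₁ ∩ interior S₂ = ∅ := by
  rw [Set.eq_empty_iff_forall_notMem]
  rintro z ⟨hz1, hz2⟩
  have hev : ∀ᶠ ε : ℝ in nhds 0, (z.1 + ε * a, z.2 + ε * b) ∈ interior S₁ := by
    have hc : Continuous (fun ε : ℝ => (z.1 + ε * a, z.2 + ε * b)) := by fun_prop
    apply hc.continuousAt.eventually_mem
    exact isOpen_interior.mem_nhds (by simpa using hz1)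
  obtain ⟨δ, hδ, hb⟩ := Metric.eventually_nhds_iff.1 hev
  have hm := h₁ _ (interior_subset (hb (y := δ / 2) (by
    rw [Real.dist_eq, sub_zero, abs_of_pos (by linarith)]; linarith)))
  have h2 := h₂ _ (interior_subset hz2)
  simp only at hm
  nlinarith [mul_pos hδ hab]

theorem Til.cut {C : Set (ℝ × ℝ) → Prop} {S S₁ S₂ : Set (ℝ × ℝ)}
    {m n : ℕ} (a b c : ℝ) (hab : 0 < a ^ 2 + b ^ 2) (h₁ : Til C S₁ m) (h₂ : Til C S₂ n)
    (hS : ∀ z, z ∈ S ↔ z ∈ S₁ ∨ z ∈ S₂)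
    (hl : ∀ z ∈ S₁, a * z.1 + b * z.2 ≤ c) (hr : ∀ z ∈ S₂, c ≤ a * z.1 + b * z.2) :
    Til C S (m + n) :=
  h₁.union h₂ (Set.ext hS) (sep_interior a b c hab hl hr)

/-! Standard pieces -/

def TriS (a b k : ℝ) : Set (ℝ × ℝ) := {z | a ≤ z.1 ∧ b ≤ z.2 ∧ z.1 + z.2 ≤ a + b + k}
def DnS (a b : ℝ) : Set (ℝ × ℝ) := {z | z.1 ≤ a ∧ z.2 ≤ b ∧ a + b - 1 ≤ z.1 + z.2}
def ParS (a b m n : ℝ) : Set (ℝ × ℝ) := {z | a ≤ z.1 ∧ z.1 ≤ a + m ∧ b ≤ z.2 ∧ z.2 ≤ b + n}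

theorem par_one {C : Set (ℝ × ℝ) → Prop} (hU : ∀ a b, C (TriS a b 1)) (hD : ∀ a b, C (DnS a b))
    (a b : ℝ) : Til C (ParS a b 1 1) 2 := by
  refine Til.cut 1 1 (a + b + 1) (by norm_num) (.one (hU a b)) (.one (hD (a + 1) (b + 1))) ?_ ?_ ?_
  · rintro ⟨x, y⟩
    simp only [TriS, DnS, ParS, Set.mem_ofPred_eq]
    constructor
    · rintro ⟨h1, h2, h3, h4⟩
      rcases le_total (x + y) (a + b + 1) with h | h
      · left; exact ⟨h1, h3, h⟩
      · right; exact ⟨h2, h4, by linarith⟩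
    · rintro (⟨h1, h2, h3⟩ | ⟨h1, h2, h3⟩) <;> refine ⟨?_, ?_, ?_, ?_⟩ <;> linarith
  · rintro ⟨x, y⟩ ⟨h1, h2, h3⟩
    simp only at *; linarith
  · rintro ⟨x, y⟩ ⟨h1, h2, h3⟩
    simp only at *; linarith

theorem par_row {C : Set (ℝ × ℝ) → Prop} (hU : ∀ a b, C (TriS a b 1)) (hD : ∀ a b, C (DnS a b))
    (a b : ℝ) (m : ℕ) : Til C (ParS a b 1 (m + 1 : ℕ)) (2 * (m + 1)) := by
  induction m with
  | zero => simpa using par_one hU hD a b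
  | succ m ih =>
    refine Til.cut 0 1 (b + (m + 1 : ℕ)) (by norm_num) ih (par_one hU hD a (b + (m + 1 : ℕ)))
      ?_ ?_ ?_
    · rintro ⟨x, y⟩
      have hm : (0 : ℝ) ≤ m := m.cast_nonneg
      simp only [ParS, Set.mem_ofPred_eq]
      push_cast
      constructor
      · rintro ⟨h1, h2, h3, h4⟩
        rcases le_total y (b + (m + 1)) with h | h
        · left; exact ⟨h1, h2, h3, h⟩
        · right; exact ⟨h1, h2, h, by linarith⟩
      · rintro (⟨h1, h2, h3, h4⟩ | ⟨h1, h2, h3, h4⟩) <;> refine ⟨?_, ?_, ?_, ?_⟩ <;> linarith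
    · rintro ⟨x, y⟩ ⟨h1, h2, h3, h4⟩
      simp only at *; linarith
    · rintro ⟨x, y⟩ ⟨h1, h2, h3, h4⟩
      simp only at *; linarith

theorem par_std {C : Set (ℝ × ℝ) → Prop} (hU : ∀ a b, C (TriS a b 1)) (hD : ∀ a b, C (DnS a b))
    (a b : ℝ) (k m : ℕ) :
    Til C (ParS a b (k + 1 : ℕ) (m + 1 : ℕ)) ((k + 1) * (2 * (m + 1))) := by
  induction k with
  | zero => simpa using par_row hU hD a b m
  | succ k ih =>
    rw [add_mul (k + 1), one_mul]
    refine Til.cut 1 0 (a + (k + 1 : ℕ)) (by norm_num) ih (par_row hU hD (a + (k + 1 : ℕ)) b m)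
      ?_ ?_ ?_
    · rintro ⟨x, y⟩
      have hm : (0 : ℝ) ≤ k := k.cast_nonneg
      simp only [ParS, Set.mem_ofPred_eq]
      push_cast
      constructor
      · rintro ⟨h1, h2, h3, h4⟩
        rcases le_total x (a + (k + 1)) with h | h
        · left; exact ⟨h1, h, h3, h4⟩
        · right; exact ⟨h, by linarith, h3, h4⟩
      · rintro (⟨h1, h2, h3, h4⟩ | ⟨h1, h2, h3, h4⟩) <;> refine ⟨?_, ?_, ?_, ?_⟩ <;> linarith
    · rintro ⟨x, y⟩ ⟨h1, h2, h3, h4⟩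
      simp only at *; linarith
    · rintro ⟨x, y⟩ ⟨h1, h2, h3, h4⟩
      simp only at *; linarith

theorem tri_std {C : Set (ℝ × ℝ) → Prop} (hU : ∀ a b, C (TriS a b 1)) (hD : ∀ a b, C (DnS a b))
    (a b : ℝ) (k : ℕ) : Til C (TriS a b (k + 1 : ℕ)) ((k + 1) ^ 2) := by
  induction k generalizing a b with
  | zero => simpa using Til.one (hU a b)
  | succ k ih =>
    have hm : (0 : ℝ) ≤ k := k.cast_nonneg
    have h1 : Til C {z : ℝ × ℝ | a ≤ z.1 ∧ z.1 ≤ a + 1 ∧ b ≤ z.2 ∧ z.1 + z.2 ≤ a + b + (k + 2)}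
        (2 * (k + 1) + 1) := by
      refine Til.cut 0 1 (b + (k + 1 : ℕ)) (by norm_num) (par_row hU hD a b k)
        (.one (hU a (b + (k + 1 : ℕ)))) ?_ ?_ ?_
      · rintro ⟨x, y⟩
        simp only [ParS, TriS, Set.mem_ofPred_eq]
        push_cast
        constructor
        · rintro ⟨h1, h2, h3, h4⟩
          rcases le_total y (b + (k + 1)) with h | h
          · left; exact ⟨h1, h2, h3, h⟩
          · right; exact ⟨h1, h, by linarith⟩
        · rintro (⟨h1, h2, h3, h4⟩ | ⟨h1, h2, h3⟩) <;> refine ⟨?_, ?_, ?_, ?_⟩ <;> linarith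
      · rintro ⟨x, y⟩ ⟨h1, h2, h3, h4⟩
        simp only at *; linarith
      · rintro ⟨x, y⟩ ⟨h1, h2, h3⟩
        simp only at *; linarith
    have e : (k + 1 + 1) ^ 2 = (2 * (k + 1) + 1) + (k + 1) ^ 2 := by ring
    rw [e]
    refine Til.cut 1 0 (a + 1) (by norm_num) h1 (ih (a + 1) b) ?_ ?_ ?_
    · rintro ⟨x, y⟩
      simp only [TriS, Set.mem_ofPred_eq]
      push_cast
      constructor
      · rintro ⟨h1, h2, h3⟩
        rcases le_total x (a + 1) with h | h
        · left; exact ⟨h1, h, h2, by linarith⟩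
        · right; exact ⟨h, h2, by linarith⟩
      · rintro (⟨h1, h2, h3, h4⟩ | ⟨h1, h2, h3⟩) <;> refine ⟨?_, ?_, ?_⟩ <;> linarith
    · rintro ⟨x, y⟩ ⟨h1, h2, h3, h4⟩
      simp only at *; linarith
    · rintro ⟨x, y⟩ ⟨h1, h2, h3⟩
      simp only at *; linarith

theorem triS_hull (a b : ℝ) :
    TriS a b 1 = convexHull ℝ {((a, b) : ℝ × ℝ), (a + 1, b), (a, b + 1)} := by
  apply Set.Subset.antisymm
  · rintro ⟨x, y⟩ ⟨h1, h2, h3⟩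
    simp only at h1 h2 h3
    have hc := convex_convexHull ℝ {((a, b) : ℝ × ℝ), (a + 1, b), (a, b + 1)}
    have m0 := subset_convexHull ℝ {((a, b) : ℝ × ℝ), (a + 1, b), (a, b + 1)}
      (show ((a, b) : ℝ × ℝ) ∈ _ by simp)
    have m1 := subset_convexHull ℝ {((a, b) : ℝ × ℝ), (a + 1, b), (a, b + 1)}
      (show ((a + 1, b) : ℝ × ℝ) ∈ _ by simp)
    have m2 := subset_convexHull ℝ {((a, b) : ℝ × ℝ), (a + 1, b), (a, b + 1)}
      (show ((a, b + 1) : ℝ × ℝ) ∈ _ by simp)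
    have := hc.sum_mem (t := Finset.univ) (w := ![1 - (x - a) - (y - b), x - a, y - b])
      (z := ![((a, b) : ℝ × ℝ), (a + 1, b), (a, b + 1)])
      (by intro i _; fin_cases i <;> simp <;> linarith)
      (by simp [Fin.sum_univ_three]; ring)
      (by intro i _; fin_cases i <;> assumption)
    convert this using 1
    simp [Fin.sum_univ_three]
    constructor <;> ring
  · apply convexHull_min
    · rintro z (rfl | rfl | rfl) <;> refine ⟨?_, ?_, ?_⟩ <;> simp only <;> linarith
    · rintro ⟨x, y⟩ ⟨h1, h2, h3⟩ ⟨x', y'⟩ ⟨h1', h2', h3'⟩ s t hs ht hst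
      simp only at h1 h2 h3 h1' h2' h3'
      obtain rfl : s = 1 - t := by linarith
      refine ⟨?_, ?_, ?_⟩ <;> simp only [Prod.smul_mk, Prod.mk_add_mk, smul_eq_mul] <;> nlinarith

theorem dnS_hull (a b : ℝ) :
    DnS a b = convexHull ℝ {((a, b) : ℝ × ℝ), (a - 1, b), (a, b - 1)} := by
  apply Set.Subset.antisymm
  · rintro ⟨x, y⟩ ⟨h1, h2, h3⟩
    simp only at h1 h2 h3
    have hc := convex_convexHull ℝ {((a, b) : ℝ × ℝ), (a - 1, b), (a, b - 1)}
    have m0 := subset_convexHull ℝ {((a, b) : ℝ × ℝ), (a - 1, b), (a, b - 1)}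
      (show ((a, b) : ℝ × ℝ) ∈ _ by simp)
    have m1 := subset_convexHull ℝ {((a, b) : ℝ × ℝ), (a - 1, b), (a, b - 1)}
      (show ((a - 1, b) : ℝ × ℝ) ∈ _ by simp)
    have m2 := subset_convexHull ℝ {((a, b) : ℝ × ℝ), (a - 1, b), (a, b - 1)}
      (show ((a, b - 1) : ℝ × ℝ) ∈ _ by simp)
    have := hc.sum_mem (t := Finset.univ) (w := ![1 - (a - x) - (b - y), a - x, b - y])
      (z := ![((a, b) : ℝ × ℝ), (a - 1, b), (a, b - 1)])
      (by intro i _; fin_cases i <;> simp <;> linarith)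
      (by simp [Fin.sum_univ_three]; ring)
      (by intro i _; fin_cases i <;> assumption)
    convert this using 1
    simp [Fin.sum_univ_three]
    constructor <;> ring
  · apply convexHull_min
    · rintro z (rfl | rfl | rfl) <;> refine ⟨?_, ?_, ?_⟩ <;> simp only <;> linarith
    · rintro ⟨x, y⟩ ⟨h1, h2, h3⟩ ⟨x', y'⟩ ⟨h1', h2', h3'⟩ s t hs ht hst
      simp only at h1 h2 h3 h1' h2' h3'
      obtain rfl : s = 1 - t := by linarith
      refine ⟨?_, ?_, ?_⟩ <;> simp only [Prod.smul_mk, Prod.mk_add_mk, smul_eq_mul] <;> nlinarith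

/-! Affine coordinate changes of the coordinate plane -/

/-- squared length in the hexagonal coordinates -/
def NN (z : ℝ × ℝ) : ℝ := z.1 ^ 2 + z.1 * z.2 + z.2 ^ 2

def CT (T : Set (ℝ × ℝ)) : Prop :=
  ∃ p q r : ℝ × ℝ, NN (q - r) = 9 ∧ NN (p - r) = 25 ∧ NN (p - q) = 49 ∧ T = convexHull ℝ {p, q, r}

def aff (p v w : ℝ × ℝ) (h : v.1 * w.2 - v.2 * w.1 ≠ 0) : (ℝ × ℝ) ≃ₜ (ℝ × ℝ) where
  toFun z := (p.1 + z.1 * v.1 + z.2 * w.1, p.2 + z.1 * v.2 + z.2 * w.2)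
  invFun z := (((z.1 - p.1) * w.2 - (z.2 - p.2) * w.1) / (v.1 * w.2 - v.2 * w.1),
    ((z.2 - p.2) * v.1 - (z.1 - p.1) * v.2) / (v.1 * w.2 - v.2 * w.1))
  left_inv := by
    rintro ⟨x, y⟩
    ext <;> simp only <;> rw [div_eq_iff h] <;> ring
  right_inv := by
    rintro ⟨x, y⟩
    ext
    · simp only
      rw [div_mul_eq_mul_div, div_mul_eq_mul_div, add_assoc, ← add_div, ← eq_sub_iff_add_eq',
        div_eq_iff h]
      ring
    · simp only
      rw [div_mul_eq_mul_div, div_mul_eq_mul_div, add_assoc, ← add_div, ← eq_sub_iff_add_eq',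
        div_eq_iff h]
      ring
  continuous_toFun := by fun_prop
  continuous_invFun := by fun_prop

theorem aff_apply (p v w : ℝ × ℝ) (h : v.1 * w.2 - v.2 * w.1 ≠ 0) (z : ℝ × ℝ) : aff p v w h z =
    (p.1 + z.1 * v.1 + z.2 * w.1, p.2 + z.1 * v.2 + z.2 * w.2) := rfl

theorem aff_hull (p v w : ℝ × ℝ) (h : v.1 * w.2 - v.2 * w.1 ≠ 0) (S : Set (ℝ × ℝ)) :
    aff p v w h '' (convexHull ℝ S) = convexHull ℝ (aff p v w h '' S) := by
  let L : (ℝ × ℝ) →ₗ[ℝ] (ℝ × ℝ) :=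
    (LinearMap.fst ℝ ℝ ℝ).smulRight v + (LinearMap.snd ℝ ℝ ℝ).smulRight w
  let f : (ℝ × ℝ) →ᵃ[ℝ] (ℝ × ℝ) := L.toAffineMap + AffineMap.const ℝ _ p
  have : (aff p v w h : ℝ × ℝ → ℝ × ℝ) = f := by
    funext z
    ext <;> simp [aff_apply, f, L] <;> ring
  rw [this, AffineMap.image_convexHull]

theorem aff_image (p v w : ℝ × ℝ) (h : v.1 * w.2 - v.2 * w.1 ≠ 0) (S : Set (ℝ × ℝ)) (z : ℝ × ℝ) :
    z ∈ aff p v w h '' S ↔ (((z.1 - p.1) * w.2 - (z.2 - p.2) * w.1) / (v.1 * w.2 - v.2 * w.1),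
    ((z.2 - p.2) * v.1 - (z.1 - p.1) * v.2) / (v.1 * w.2 - v.2 * w.1)) ∈ S := by
  rw [Homeomorph.image_eq_preimage_symm]
  rfl

theorem aff_up (p v w : ℝ × ℝ) (h : v.1 * w.2 - v.2 * w.1 ≠ 0) (hv : NN v = 9) (hw : NN w = 25)
    (hvw : NN (w - v) = 49) (a b : ℝ) : CT (aff p v w h '' TriS a b 1) := by
  rw [triS_hull, aff_hull]
  refine ⟨aff p v w h (a, b + 1), aff p v w h (a + 1, b), aff p v w h (a, b), ?_, ?_, ?_, ?_⟩
  · rw [← hv]; simp only [NN, aff_apply, Prod.fst_sub, Prod.snd_sub]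
    ring
  · rw [← hw]; simp only [NN, aff_apply, Prod.fst_sub, Prod.snd_sub]
    ring
  · rw [← hvw]; simp only [NN, aff_apply, Prod.fst_sub, Prod.snd_sub]
    ring
  · congr 1
    rw [Set.image_insert_eq, Set.image_insert_eq, Set.image_singleton]
    ext z
    simp only [Set.mem_insert_iff, Set.mem_singleton_iff]
    tauto

theorem aff_dn (p v w : ℝ × ℝ) (h : v.1 * w.2 - v.2 * w.1 ≠ 0) (hv : NN v = 9) (hw : NN w = 25)
    (hvw : NN (w - v) = 49) (a b : ℝ) : CT (aff p v w h '' DnS a b) := by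
  rw [dnS_hull, aff_hull]
  refine ⟨aff p v w h (a, b - 1), aff p v w h (a - 1, b), aff p v w h (a, b), ?_, ?_, ?_, ?_⟩
  · rw [← hv]; simp only [NN, aff_apply, Prod.fst_sub, Prod.snd_sub]
    ring
  · rw [← hw]; simp only [NN, aff_apply, Prod.fst_sub, Prod.snd_sub]
    ring
  · rw [← hvw]; simp only [NN, aff_apply, Prod.fst_sub, Prod.snd_sub]
    ring
  · congr 1
    rw [Set.image_insert_eq, Set.image_insert_eq, Set.image_singleton]
    ext z
    simp only [Set.mem_insert_iff, Set.mem_singleton_iff]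
    tauto

theorem tri_til (p v w : ℝ × ℝ) (h : v.1 * w.2 - v.2 * w.1 ≠ 0) (hv : NN v = 9) (hw : NN w = 25)
    (hvw : NN (w - v) = 49) (k : ℕ) :
    Til CT (aff p v w h '' TriS 0 0 (k + 1 : ℕ)) ((k + 1) ^ 2) :=
  (tri_std (C := fun T => CT (aff p v w h '' T)) (aff_up p v w h hv hw hvw)
    (aff_dn p v w h hv hw hvw) 0 0 k).map (aff p v w h) (fun _ h => h)

theorem par_til (p v w : ℝ × ℝ) (h : v.1 * w.2 - v.2 * w.1 ≠ 0) (hv : NN v = 9) (hw : NN w = 25)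
    (hvw : NN (w - v) = 49) (k m : ℕ) :
    Til CT (aff p v w h '' ParS 0 0 (k + 1 : ℕ) (m + 1 : ℕ)) ((k + 1) * (2 * (m + 1))) :=
  (par_std (C := fun T => CT (aff p v w h '' T)) (aff_up p v w h hv hw hvw)
    (aff_dn p v w h hv hw hvw) 0 0 k m).map (aff p v w h) (fun _ h => h)

/-- moving by an isometry -/
theorem Til.move {S : Set (ℝ × ℝ)} {n : ℕ} (hS : Til CT S n) (p v w : ℝ × ℝ)
    (h : v.1 * w.2 - v.2 * w.1 ≠ 0) (hN : ∀ x y, NN (x • v + y • w) = NN (x, y)) :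
    Til CT (aff p v w h '' S) n := by
  refine hS.map _ ?_
  rintro _ ⟨P, Q, R, h1, h2, h3, rfl⟩
  have key : ∀ a b, NN (aff p v w h a - aff p v w h b) = NN (a - b) := by
    intro a b
    have := hN (a.1 - b.1) (a.2 - b.2)
    rw [show a - b = (a.1 - b.1, a.2 - b.2) from rfl, ← this]
    congr 1
    ext <;> simp [aff_apply] <;> ring
  refine ⟨aff p v w h P, aff p v w h Q, aff p v w h R, ?_, ?_, ?_, ?_⟩
  · rw [key, h1]
  · rw [key, h2]
  · rw [key, h3]
  · rw [aff_hull, Set.image_insert_eq, Set.image_insert_eq, Set.image_singleton]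

/-! The pieces -/

theorem Til.congr {X : Type} [TopologicalSpace X] {C : Set X → Prop} {S S' : Set X} {n : ℕ}
    (h : Til C S n) (hS : ∀ z, z ∈ S' ↔ z ∈ S) : Til C S' n := by
  rw [Set.ext hS]; exact h

theorem interior_union_inter {X : Type} [TopologicalSpace X] {A B C : Set X} (hA : IsClosed A)
    (h1 : interior A ∩ interior C = ∅) (h2 : interior B ∩ interior C = ∅) :
    interior (A ∪ B) ∩ interior C = ∅ := by
  have hW : IsOpen (interior (A ∪ B) ∩ interior C) := isOpen_interior.inter isOpen_interior
  have hWA : interior (A ∪ B) ∩ interior C ⊆ A := by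
    intro x hx
    by_contra hxA
    have hsub : (interior (A ∪ B) ∩ interior C) ∩ Aᶜ ⊆ B := by
      rintro y ⟨⟨hy1, _⟩, hy2⟩
      rcases interior_subset hy1 with h | h
      · exact absurd h hy2
      · exact h
    have hB : x ∈ interior B := interior_maximal hsub (hW.inter hA.isOpen_compl) ⟨hx, hxA⟩
    have : x ∈ interior B ∩ interior C := ⟨hB, hx.2⟩
    rw [h2] at this
    exact this
  rw [Set.eq_empty_iff_forall_notMem]
  intro x hx
  have : x ∈ interior A ∩ interior C := ⟨interior_maximal hWA hW hx, hx.2⟩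
  rw [h1] at this
  exact this

def Strip (b : ℝ) : Set (ℝ × ℝ) := {z | 0 ≤ z.2 ∧ z.2 ≤ 15 ∧ 0 ≤ z.1 ∧ z.1 + z.2 ≤ b}

theorem strip_core (n : ℝ) :
    Til CT {z : ℝ × ℝ | 0 ≤ z.2 ∧ z.2 ≤ 15 ∧ n ≤ z.1 ∧ z.1 + z.2 ≤ n + 49} 83 := by
  have t1 : Til CT {z : ℝ × ℝ | n ≤ z.1 ∧ z.2 ≤ 15 ∧ 5 * z.1 - 3 * z.2 ≤ 5 * n} 9 := by
    refine (tri_til (n, 15) (3, 0) (0, -5) (by norm_num) (by norm_num [NN]) (by norm_num [NN])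
      (by norm_num [NN]) 2).congr ?_
    rintro ⟨x, y⟩
    rw [aff_image]
    simp only [TriS, Set.mem_ofPred_eq]
    norm_num
    constructor
    · rintro ⟨h1, h2, h3⟩; refine ⟨?_, ?_, ?_⟩ <;> linarith
    · rintro ⟨h1, h2, h3⟩; refine ⟨?_, ?_, ?_⟩ <;> linarith
  have t2 : Til CT {z : ℝ × ℝ | 0 ≤ z.2 ∧ 5 * n ≤ 5 * z.1 - 3 * z.2 ∧
      3 * z.1 + 8 * z.2 ≤ 3 * n + 147} 49 := by
    refine (tri_til (n + 9, 15) (-9/7, -15/7) (40/7, -15/7) (by norm_num) (by norm_num [NN])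
      (by norm_num [NN]) (by norm_num [NN]) 6).congr ?_
    rintro ⟨x, y⟩
    rw [aff_image]
    simp only [TriS, Set.mem_ofPred_eq]
    norm_num
    constructor
    · rintro ⟨h1, h2, h3⟩; refine ⟨?_, ?_, ?_⟩ <;> linarith
    · rintro ⟨h1, h2, h3⟩; refine ⟨?_, ?_, ?_⟩ <;> linarith
  have t3 : Til CT {z : ℝ × ℝ | z.2 ≤ 15 ∧ z.1 + z.2 ≤ n + 49 ∧
      3 * n + 147 ≤ 3 * z.1 + 8 * z.2} 25 := by
    refine (tri_til (n + 34, 15) (3, -3) (-5, 0) (by norm_num) (by norm_num [NN])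
      (by norm_num [NN]) (by norm_num [NN]) 4).congr ?_
    rintro ⟨x, y⟩
    rw [aff_image]
    simp only [TriS, Set.mem_ofPred_eq]
    norm_num
    constructor
    · rintro ⟨h1, h2, h3⟩; refine ⟨?_, ?_, ?_⟩ <;> linarith
    · rintro ⟨h1, h2, h3⟩; refine ⟨?_, ?_, ?_⟩ <;> linarith
  have t4 : Til CT {z : ℝ × ℝ | 0 ≤ z.2 ∧ z.2 ≤ 15 ∧ n ≤ z.1 ∧ 3 * z.1 + 8 * z.2 ≤ 3 * n + 147}
      (9 + 49) := by
    refine Til.cut 5 (-3) (5 * n) (by norm_num) t1 t2 ?_ ?_ ?_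
    · rintro ⟨x, y⟩
      simp only [Set.mem_ofPred_eq]
      constructor
      · rintro ⟨h1, h2, h3, h4⟩
        rcases le_total (5 * x - 3 * y) (5 * n) with h | h
        · left; exact ⟨h3, h2, h⟩
        · right; exact ⟨h1, h, h4⟩
      · rintro (⟨h1, h2, h3⟩ | ⟨h1, h2, h3⟩) <;> refine ⟨?_, ?_, ?_, ?_⟩ <;> linarith
    · rintro ⟨x, y⟩ ⟨h1, h2, h3⟩
      simp only at *; linarith
    · rintro ⟨x, y⟩ ⟨h1, h2, h3⟩
      simp only at *; linarith
  refine Til.cut 3 8 (3 * n + 147) (by norm_num) t4 t3 ?_ ?_ ?_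
  · rintro ⟨x, y⟩
    simp only [Set.mem_ofPred_eq]
    constructor
    · rintro ⟨h1, h2, h3, h4⟩
      rcases le_total (3 * x + 8 * y) (3 * n + 147) with h | h
      · left; exact ⟨h1, h2, h3, h⟩
      · right; exact ⟨h2, h4, h⟩
    · rintro (⟨h1, h2, h3, h4⟩ | ⟨h1, h2, h3⟩) <;> refine ⟨?_, ?_, ?_, ?_⟩ <;> linarith
  · rintro ⟨x, y⟩ ⟨h1, h2, h3, h4⟩
    simp only at *; linarith
  · rintro ⟨x, y⟩ ⟨h1, h2, h3⟩
    simp only at *; linarith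

theorem strip_til (k : ℕ) : Til CT (Strip (3 * k + 57)) (6 * k + 99) := by
  have hk : (0 : ℝ) ≤ k := k.cast_nonneg
  have p1 : Til CT {z : ℝ × ℝ | 0 ≤ z.2 ∧ z.2 ≤ 15 ∧ 0 ≤ z.1 ∧ z.1 ≤ 3 * k + 3}
      ((k + 1) * (2 * (2 + 1))) := by
    refine (par_til (3 * k + 3, 0) (-3, 0) (0, 5) (by norm_num) (by norm_num [NN])
      (by norm_num [NN]) (by norm_num [NN]) k 2).congr ?_
    rintro ⟨x, y⟩
    rw [aff_image]
    simp only [ParS, Set.mem_ofPred_eq]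
    norm_num
    constructor
    · rintro ⟨h1, h2, h3, h4⟩; refine ⟨?_, ?_, ?_, ?_⟩ <;> linarith
    · rintro ⟨h1, h2, h3, h4⟩; refine ⟨?_, ?_, ?_, ?_⟩ <;> linarith
  have p2 : Til CT {z : ℝ × ℝ | 0 ≤ z.2 ∧ z.2 ≤ 15 ∧ 3 * k + 3 ≤ z.1 ∧ z.1 ≤ 3 * k + 8}
      10 := by
    refine (par_til (3 * k + 3, 15) (0, -3) (5, 0) (by norm_num) (by norm_num [NN])
      (by norm_num [NN]) (by norm_num [NN]) 4 0).congr ?_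
    rintro ⟨x, y⟩
    rw [aff_image]
    simp only [ParS, Set.mem_ofPred_eq]
    norm_num
    constructor
    · rintro ⟨h1, h2, h3, h4⟩; refine ⟨?_, ?_, ?_, ?_⟩ <;> linarith
    · rintro ⟨h1, h2, h3, h4⟩; refine ⟨?_, ?_, ?_, ?_⟩ <;> linarith
  have p3 : Til CT {z : ℝ × ℝ | 0 ≤ z.2 ∧ z.2 ≤ 15 ∧ 3 * k + 3 ≤ z.1 ∧ z.1 + z.2 ≤ 3 * k + 57}
      (10 + 83) := by
    refine Til.cut 1 0 (3 * k + 8) (by norm_num) p2 (strip_core (3 * k + 8)) ?_ ?_ ?_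
    · rintro ⟨x, y⟩
      simp only [Set.mem_ofPred_eq]
      constructor
      · rintro ⟨h1, h2, h3, h4⟩
        rcases le_total x (3 * k + 8) with h | h
        · left; exact ⟨h1, h2, h3, h⟩
        · right; exact ⟨h1, h2, h, by linarith⟩
      · rintro (⟨h1, h2, h3, h4⟩ | ⟨h1, h2, h3, h4⟩) <;> refine ⟨?_, ?_, ?_, ?_⟩ <;> linarith
    · rintro ⟨x, y⟩ ⟨h1, h2, h3, h4⟩
      simp only at *; linarith
    · rintro ⟨x, y⟩ ⟨h1, h2, h3, h4⟩
      simp only at *; linarith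
  rw [show 6 * k + 99 = (k + 1) * (2 * (2 + 1)) + (10 + 83) by ring]
  refine Til.cut 1 0 (3 * k + 3) (by norm_num) p1 p3 ?_ ?_ ?_
  · rintro ⟨x, y⟩
    simp only [Strip, Set.mem_ofPred_eq]
    constructor
    · rintro ⟨h1, h2, h3, h4⟩
      rcases le_total x (3 * k + 3) with h | h
      · left; exact ⟨h1, h2, h3, h⟩
      · right; exact ⟨h1, h2, h, by linarith⟩
    · rintro (⟨h1, h2, h3, h4⟩ | ⟨h1, h2, h3, h4⟩) <;> refine ⟨?_, ?_, ?_, ?_⟩ <;> linarith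
  · rintro ⟨x, y⟩ ⟨h1, h2, h3, h4⟩
    simp only at *; linarith
  · rintro ⟨x, y⟩ ⟨h1, h2, h3, h4⟩
    simp only at *; linarith

theorem Til.shift {S : Set (ℝ × ℝ)} {n : ℕ} (hS : Til CT S n) (c : ℝ) :
    Til CT {z : ℝ × ℝ | (z.1, z.2 - c) ∈ S} n := by
  refine (hS.move (0, c) (1, 0) (0, 1) (by norm_num) (fun x y => by simp [NN])).congr ?_
  rintro ⟨x, y⟩
  rw [aff_image]
  simp

theorem trap_til : Til CT {z : ℝ × ℝ | 0 ≤ z.1 ∧ 0 ≤ z.2 ∧ z.2 ≤ 45 ∧ z.1 + z.2 ≤ 90} 405 := by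
  have s1 := strip_til 11
  have s2 := (strip_til 6).shift 15
  have s3 := (strip_til 1).shift 30
  norm_num [Strip] at s1 s2 s3
  have s4 : Til CT {z : ℝ × ℝ | 0 ≤ z.1 ∧ 0 ≤ z.2 ∧ z.2 ≤ 30 ∧ z.1 + z.2 ≤ 90} (165 + 135) := by
    refine Til.cut 0 1 15 (by norm_num) s1 s2 ?_ ?_ ?_
    · rintro ⟨x, y⟩
      simp only [Set.mem_ofPred_eq]
      constructor
      · rintro ⟨h1, h2, h3, h4⟩
        rcases le_total y 15 with h | h
        · left; refine ⟨?_, ?_, ?_, ?_⟩ <;> linarith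
        · right; refine ⟨?_, ?_, ?_, ?_⟩ <;> linarith
      · rintro (⟨h1, h2, h3, h4⟩ | ⟨h1, h2, h3, h4⟩) <;> refine ⟨?_, ?_, ?_, ?_⟩ <;> linarith
    · rintro ⟨x, y⟩ ⟨h1, h2, h3, h4⟩
      simp only at *; linarith
    · rintro ⟨x, y⟩ ⟨h1, h2, h3, h4⟩
      simp only at *; linarith
  refine Til.cut 0 1 30 (by norm_num) s4 s3 ?_ ?_ ?_
  · rintro ⟨x, y⟩
    simp only [Set.mem_ofPred_eq]
    constructor
    · rintro ⟨h1, h2, h3, h4⟩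
      rcases le_total y 30 with h | h
      · left; refine ⟨?_, ?_, ?_, ?_⟩ <;> linarith
      · right; refine ⟨?_, ?_, ?_, ?_⟩ <;> linarith
    · rintro (⟨h1, h2, h3, h4⟩ | ⟨h1, h2, h3, h4⟩) <;> refine ⟨?_, ?_, ?_, ?_⟩ <;> linarith
  · rintro ⟨x, y⟩ ⟨h1, h2, h3, h4⟩
    simp only at *; linarith
  · rintro ⟨x, y⟩ ⟨h1, h2, h3, h4⟩
    simp only at *; linarith

theorem eq135_til : Til CT {z : ℝ × ℝ | 0 ≤ z.1 ∧ 0 ≤ z.2 ∧ z.1 + z.2 ≤ 135} 1215 := by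
  have t1 := trap_til
  have t2 : Til CT {z : ℝ × ℝ | 0 ≤ z.2 ∧ z.1 + z.2 ≤ 135 ∧ 90 ≤ z.1 + z.2 ∧ 45 ≤ z.1} 405 := by
    refine (trap_til.move (135, 0) (-1, 1) (-1, 0) (by norm_num)
      (fun x y => by simp [NN]; ring)).congr ?_
    rintro ⟨x, y⟩
    rw [aff_image]
    simp only [Set.mem_ofPred_eq]
    norm_num
    intro h0
    constructor
    · rintro ⟨h1, h2, h3⟩; refine ⟨?_, ?_, ?_⟩ <;> linarith
    · rintro ⟨h1, h2, h3⟩; refine ⟨?_, ?_, ?_⟩ <;> linarith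
  have t3 : Til CT {z : ℝ × ℝ | 0 ≤ z.1 ∧ z.1 ≤ 45 ∧ 45 ≤ z.2 ∧ z.1 + z.2 ≤ 135} 405 := by
    refine (trap_til.move (0, 135) (0, -1) (1, -1) (by norm_num)
      (fun x y => by simp [NN]; ring)).congr ?_
    rintro ⟨x, y⟩
    rw [aff_image]
    simp only [Set.mem_ofPred_eq]
    norm_num
    constructor
    · rintro ⟨h1, h2, h3, h4⟩; refine ⟨?_, ?_, ?_, ?_⟩ <;> linarith
    · rintro ⟨h1, h2, h3, h4⟩; refine ⟨?_, ?_, ?_, ?_⟩ <;> linarith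
  have t12 := t1.union t2 rfl (sep_interior 1 1 90 (by norm_num)
    (by rintro ⟨x, y⟩ ⟨h1, h2, h3, h4⟩; simp only at *; linarith)
    (by rintro ⟨x, y⟩ ⟨h1, h2, h3, h4⟩; simp only at *; linarith))
  refine t12.union t3 ?_ (interior_union_inter ?_ ?_ ?_)
  · ext ⟨x, y⟩
    simp only [Set.mem_union, Set.mem_ofPred_eq]
    constructor
    · rintro ⟨h1, h2, h3⟩
      rcases le_total y 45 with h | h
      · rcases le_total (x + y) 90 with h' | h'
        · left; left; exact ⟨h1, h2, h, h'⟩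
        · left; right; exact ⟨h2, h3, h', by linarith⟩
      · rcases le_total x 45 with h' | h'
        · right; exact ⟨h1, h', h, h3⟩
        · left; right; exact ⟨h2, h3, by linarith, h'⟩
    · rintro ((⟨h1, h2, h3, h4⟩ | ⟨h1, h2, h3, h4⟩) | ⟨h1, h2, h3, h4⟩) <;>
        refine ⟨?_, ?_, ?_⟩ <;> linarith
  · have c1 : Continuous (fun z : ℝ × ℝ => z.1) := continuous_fst
    have c2 : Continuous (fun z : ℝ × ℝ => z.2) := continuous_snd
    exact (isClosed_le continuous_const c1).inter ((isClosed_le continuous_const c2).inter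
      ((isClosed_le c2 continuous_const).inter (isClosed_le (c1.add c2) continuous_const)))
  · exact sep_interior 0 1 45 (by norm_num)
      (by rintro ⟨x, y⟩ ⟨h1, h2, h3, h4⟩; simp only at *; linarith)
      (by rintro ⟨x, y⟩ ⟨h1, h2, h3, h4⟩; simp only at *; linarith)
  · exact sep_interior (-1) 0 (-45) (by norm_num)
      (by rintro ⟨x, y⟩ ⟨h1, h2, h3, h4⟩; simp only at *; linarith)
      (by rintro ⟨x, y⟩ ⟨h1, h2, h3, h4⟩; simp only at *; linarith)

theorem eq150_til : Til CT {z : ℝ × ℝ | 0 ≤ z.1 ∧ 0 ≤ z.2 ∧ z.1 + z.2 ≤ 150} (285 + 1215) := by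
  have s1 := strip_til 31
  have s2 := eq135_til.shift 15
  norm_num [Strip] at s1 s2
  refine Til.cut 0 1 15 (by norm_num) s1 s2 ?_ ?_ ?_
  · rintro ⟨x, y⟩
    simp only [Set.mem_ofPred_eq]
    constructor
    · rintro ⟨h1, h2, h3⟩
      rcases le_total y 15 with h | h
      · left; refine ⟨?_, ?_, ?_, ?_⟩ <;> linarith
      · right; refine ⟨?_, ?_, ?_⟩ <;> linarith
    · rintro (⟨h1, h2, h3, h4⟩ | ⟨h1, h2, h3⟩) <;> refine ⟨?_, ?_, ?_⟩ <;> linarith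
  · rintro ⟨x, y⟩ ⟨h1, h2, h3, h4⟩
    simp only at *; linarith
  · rintro ⟨x, y⟩ ⟨h1, h2, h3⟩
    simp only at *; linarith

theorem big_til : Til CT {z : ℝ × ℝ | 0 ≤ z.1 ∧ 0 ≤ z.2 ∧ 39 * z.1 + 55 * z.2 ≤ 10725} 3575 := by
  have a1 : Til CT {z : ℝ × ℝ | 825 ≤ 3 * z.1 + 8 * z.2 ∧ 975 ≤ 8 * z.1 + 5 * z.2 ∧
      39 * z.1 + 55 * z.2 ≤ 10725} 1225 := by
    refine (tri_til (75, 75) (-15/7, 24/7) (40/7, -15/7) (by norm_num) (by norm_num [NN])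
      (by norm_num [NN]) (by norm_num [NN]) 34).congr ?_
    rintro ⟨x, y⟩
    rw [aff_image]
    simp only [TriS, Set.mem_ofPred_eq]
    norm_num
    constructor
    · rintro ⟨h1, h2, h3⟩; refine ⟨?_, ?_, ?_⟩ <;> linarith
    · rintro ⟨h1, h2, h3⟩; refine ⟨?_, ?_, ?_⟩ <;> linarith
  have a2 : Til CT {z : ℝ × ℝ | 0 ≤ z.2 ∧ 150 ≤ z.1 + z.2 ∧ 3 * z.1 + 8 * z.2 ≤ 825} 625 := by
    refine (tri_til (150, 0) (-3, 3) (5, 0) (by norm_num) (by norm_num [NN])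
      (by norm_num [NN]) (by norm_num [NN]) 24).congr ?_
    rintro ⟨x, y⟩
    rw [aff_image]
    simp only [TriS, Set.mem_ofPred_eq]
    norm_num
    constructor
    · rintro ⟨h1, h2, h3⟩; refine ⟨?_, ?_, ?_⟩ <;> linarith
    · rintro ⟨h1, h2, h3⟩; refine ⟨?_, ?_, ?_⟩ <;> linarith
  have a3 : Til CT {z : ℝ × ℝ | 0 ≤ z.1 ∧ 150 ≤ z.1 + z.2 ∧ 8 * z.1 + 5 * z.2 ≤ 975} 225 := by
    refine (tri_til (0, 150) (0, 3) (5, -5) (by norm_num) (by norm_num [NN])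
      (by norm_num [NN]) (by norm_num [NN]) 14).congr ?_
    rintro ⟨x, y⟩
    rw [aff_image]
    simp only [TriS, Set.mem_ofPred_eq]
    norm_num
    constructor
    · rintro ⟨h1, h2, h3⟩; refine ⟨?_, ?_, ?_⟩ <;> linarith
    · rintro ⟨h1, h2, h3⟩; refine ⟨?_, ?_, ?_⟩ <;> linarith
  have a4 : Til CT {z : ℝ × ℝ | 0 ≤ z.2 ∧ 150 ≤ z.1 + z.2 ∧ 975 ≤ 8 * z.1 + 5 * z.2 ∧
      39 * z.1 + 55 * z.2 ≤ 10725} (625 + 1225) := by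
    refine Til.cut 3 8 825 (by norm_num) a2 a1 ?_ ?_ ?_
    · rintro ⟨x, y⟩
      simp only [Set.mem_ofPred_eq]
      constructor
      · rintro ⟨h1, h2, h3, h4⟩
        rcases le_total (3 * x + 8 * y) 825 with h | h
        · left; exact ⟨h1, h2, h⟩
        · right; exact ⟨h, h3, h4⟩
      · rintro (⟨h1, h2, h3⟩ | ⟨h1, h2, h3⟩) <;> refine ⟨?_, ?_, ?_, ?_⟩ <;> linarith
    · rintro ⟨x, y⟩ ⟨h1, h2, h3⟩
      simp only at *; linarith
    · rintro ⟨x, y⟩ ⟨h1, h2, h3⟩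
      simp only at *; linarith
  have a5 : Til CT {z : ℝ × ℝ | 0 ≤ z.1 ∧ 0 ≤ z.2 ∧ 150 ≤ z.1 + z.2 ∧
      39 * z.1 + 55 * z.2 ≤ 10725} (225 + (625 + 1225)) := by
    refine Til.cut 8 5 975 (by norm_num) a3 a4 ?_ ?_ ?_
    · rintro ⟨x, y⟩
      simp only [Set.mem_ofPred_eq]
      constructor
      · rintro ⟨h1, h2, h3, h4⟩
        rcases le_total (8 * x + 5 * y) 975 with h | h
        · left; exact ⟨h1, h3, h⟩
        · right; exact ⟨h2, h3, h, h4⟩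
      · rintro (⟨h1, h2, h3⟩ | ⟨h1, h2, h3, h4⟩) <;> refine ⟨?_, ?_, ?_, ?_⟩ <;> linarith
    · rintro ⟨x, y⟩ ⟨h1, h2, h3⟩
      simp only at *; linarith
    · rintro ⟨x, y⟩ ⟨h1, h2, h3, h4⟩
      simp only at *; linarith
  refine Til.cut 1 1 150 (by norm_num) eq150_til a5 ?_ ?_ ?_
  · rintro ⟨x, y⟩
    simp only [Set.mem_ofPred_eq]
    constructor
    · rintro ⟨h1, h2, h3⟩
      rcases le_total (x + y) 150 with h | h
      · left; exact ⟨h1, h2, h⟩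
      · right; exact ⟨h1, h2, h, h3⟩
    · rintro (⟨h1, h2, h3⟩ | ⟨h1, h2, h3, h4⟩) <;> refine ⟨?_, ?_, ?_⟩ <;> linarith
  · rintro ⟨x, y⟩ ⟨h1, h2, h3⟩
    simp only at *; linarith
  · rintro ⟨x, y⟩ ⟨h1, h2, h3, h4⟩
    simp only at *; linarith

/-! Transfer to the Euclidean plane -/

theorem dsq (a b : Plane) : dist a b ^ 2 = (a 0 - b 0) ^ 2 + (a 1 - b 1) ^ 2 := by
  rw [EuclideanSpace.dist_eq, Real.sq_sqrt (by positivity), Fin.sum_univ_two, Real.dist_eq,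
    Real.dist_eq, sq_abs, sq_abs]

theorem dist_of_dsq {a b : Plane} {r : ℝ} (hr : 0 ≤ r)
    (h : (a 0 - b 0) ^ 2 + (a 1 - b 1) ^ 2 = r ^ 2) : dist a b = r := by
  rw [← dsq] at h
  exact (sq_eq_sq₀ dist_nonneg hr).1 h

def gmap (p v w : Plane) (h : v 0 * w 1 - v 1 * w 0 ≠ 0) : (ℝ × ℝ) ≃ₜ Plane where
  toFun z := p + z.1 • v + z.2 • w
  invFun q := (((q 0 - p 0) * w 1 - (q 1 - p 1) * w 0) / (v 0 * w 1 - v 1 * w 0),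
    ((q 1 - p 1) * v 0 - (q 0 - p 0) * v 1) / (v 0 * w 1 - v 1 * w 0))
  left_inv := by
    rintro ⟨x, y⟩
    ext <;> simp <;> rw [div_eq_iff h] <;> ring
  right_inv := by
    intro q
    ext i
    fin_cases i
    · simp
      rw [div_mul_eq_mul_div, div_mul_eq_mul_div, add_assoc, ← add_div, ← eq_sub_iff_add_eq',
        div_eq_iff h]
      ring
    · simp
      rw [div_mul_eq_mul_div, div_mul_eq_mul_div, add_assoc, ← add_div, ← eq_sub_iff_add_eq',
        div_eq_iff h]
      ring
  continuous_toFun := by fun_prop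
  continuous_invFun := by fun_prop

theorem gmap_apply (p v w : Plane) (h : v 0 * w 1 - v 1 * w 0 ≠ 0) (z : ℝ × ℝ) :
    gmap p v w h z = p + z.1 • v + z.2 • w := rfl

theorem gmap_hull (p v w : Plane) (h : v 0 * w 1 - v 1 * w 0 ≠ 0) (S : Set (ℝ × ℝ)) :
    gmap p v w h '' (convexHull ℝ S) = convexHull ℝ (gmap p v w h '' S) := by
  let L : (ℝ × ℝ) →ₗ[ℝ] Plane :=
    (LinearMap.fst ℝ ℝ ℝ).smulRight v + (LinearMap.snd ℝ ℝ ℝ).smulRight w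
  let f : (ℝ × ℝ) →ᵃ[ℝ] Plane := L.toAffineMap + AffineMap.const ℝ _ p
  have : (gmap p v w h : ℝ × ℝ → Plane) = f := by
    funext z
    simp only [gmap_apply, f, L, AffineMap.coe_add, Pi.add_apply, LinearMap.coe_toAffineMap,
      LinearMap.add_apply, LinearMap.smulRight_apply, LinearMap.fst_apply, LinearMap.snd_apply,
      AffineMap.const_apply]
    abel
  rw [this, AffineMap.image_convexHull]

theorem det_ne {P Q R : Plane} {a b c : ℝ} (h1 : dist Q R = a) (h2 : dist P R = b)
    (h3 : dist P Q = c) (h : 4 * a ^ 2 * b ^ 2 - (a ^ 2 + b ^ 2 - c ^ 2) ^ 2 ≠ 0) :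
    (P - R) 0 * (Q - R) 1 - (P - R) 1 * (Q - R) 0 ≠ 0 := by
  intro h0
  apply h
  rw [← h1, ← h2, ← h3]
  have : 4 * dist Q R ^ 2 * dist P R ^ 2 - (dist Q R ^ 2 + dist P R ^ 2 - dist P Q ^ 2) ^ 2 =
      4 * ((P - R) 0 * (Q - R) 1 - (P - R) 1 * (Q - R) 0) ^ 2 := by
    rw [dsq, dsq, dsq]
    simp only [PiLp.sub_apply]
    ring
  rw [this, h0]
  ring

theorem gmap_dist (P Q R : Plane) (h) (z z' : ℝ × ℝ) :
    dist (gmap R (P - R) (Q - R) h z) (gmap R (P - R) (Q - R) h z') ^ 2 =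
      (z.1 - z'.1) ^ 2 * dist P R ^ 2 + (z.2 - z'.2) ^ 2 * dist Q R ^ 2 +
      (z.1 - z'.1) * (z.2 - z'.2) * (dist P R ^ 2 + dist Q R ^ 2 - dist P Q ^ 2) := by
  rw [dsq, dsq, dsq, dsq]
  simp only [gmap_apply, PiLp.sub_apply, PiLp.add_apply, PiLp.smul_apply, smul_eq_mul]
  ring

theorem gmap_tri (P Q R : Plane) (h) :
    gmap R (P - R) (Q - R) h '' (convexHull ℝ {(1, 0), (0, 1), (0, 0)}) = convexHull ℝ {P, Q, R} := by
  rw [gmap_hull, Set.image_insert_eq, Set.image_insert_eq, Set.image_singleton]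
  simp [gmap_apply]

theorem congr_tri {P Q R P' Q' R' : Plane} (h1 : dist Q R = 3) (h2 : dist P R = 5)
    (h3 : dist P Q = 7) (h1' : dist Q' R' = 3) (h2' : dist P' R' = 5) (h3' : dist P' Q' = 7) :
    ∃ f : Plane ≃ᵢ Plane, f '' (convexHull ℝ {P, Q, R}) = convexHull ℝ {P', Q', R'} := by
  have hd := det_ne h1 h2 h3 (by norm_num)
  have hd' := det_ne h1' h2' h3' (by norm_num)
  let e := (gmap R (P - R) (Q - R) hd).symm.trans (gmap R' (P' - R') (Q' - R') hd')
  have hiso : Isometry e := by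
    refine Isometry.of_dist_eq fun x y => ?_
    obtain ⟨z, rfl⟩ := (gmap R (P - R) (Q - R) hd).surjective x
    obtain ⟨z', rfl⟩ := (gmap R (P - R) (Q - R) hd).surjective y
    rw [← sq_eq_sq₀ dist_nonneg dist_nonneg]
    simp only [e, Homeomorph.trans_apply, Homeomorph.symm_apply_apply]
    rw [gmap_dist, gmap_dist, h1, h2, h3, h1', h2', h3']
  refine ⟨⟨e.toEquiv, hiso⟩, ?_⟩
  change e '' _ = _
  rw [← gmap_tri P Q R hd, ← gmap_tri P' Q' R' hd', ← Set.image_comp]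
  congr 1
  funext z
  simp [e]

theorem tiles_of_til {S : Set Plane} {n : ℕ} (h : Til (IsTriangle 3 5 7) S (n + 1)) :
    TilesInto S (n + 1) 3 5 7 := by
  obtain ⟨T, h1, h2, h3⟩ := h
  obtain ⟨P, Q, R, d1, d2, d3, hT⟩ := h1 0
  have : ∀ i, ∃ f : Plane ≃ᵢ Plane, f '' (T 0) = T i := by
    intro i
    obtain ⟨P', Q', R', d1', d2', d3', hT'⟩ := h1 i
    rw [hT, hT']
    exact congr_tri d1 d2 d3 d1' d2' d3'
  choose f hf using this
  refine ⟨f, T 0, h1 0, ?_, ?_⟩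
  · simp_rw [hf]; exact h2
  · intro i j hij
    rw [hf, hf]; exact h3 i j hij

theorem big_hull : convexHull ℝ {((275, 0) : ℝ × ℝ), (0, 195), (0, 0)} =
    {z : ℝ × ℝ | 0 ≤ z.1 ∧ 0 ≤ z.2 ∧ 39 * z.1 + 55 * z.2 ≤ 10725} := by
  have e := aff_hull (0, 0) (275, 0) (0, 195) (by norm_num) {((0, 0) : ℝ × ℝ), (0 + 1, 0), (0, 0 + 1)}
  rw [← triS_hull, Set.image_insert_eq, Set.image_insert_eq, Set.image_singleton] at e
  simp only [aff_apply] at e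
  norm_num at e
  have s : {((275, 0) : ℝ × ℝ), (0, 195), (0, 0)} = ({(0, 0), (275, 0), (0, 195)} : Set (ℝ × ℝ)) := by
    ext z
    simp only [Set.mem_insert_iff, Set.mem_singleton_iff]
    tauto
  rw [s]
  refine Eq.trans e.symm ?_
  ext ⟨x, y⟩
  refine (aff_image (0, 0) (275, 0) (0, 195) (by norm_num) _ _).trans ?_
  simp only [TriS, Set.mem_ofPred_eq]
  norm_num
  constructor <;> (rintro ⟨h1, h2, h3⟩; refine ⟨?_, ?_, ?_⟩ <;> linarith)

theorem stmt10 :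
    ∀ Δ : Set Plane, IsTriangle 195 275 245 Δ → TilesInto Δ 3575 3 5 7 := by
  rintro Δ ⟨P, Q, R, h1, h2, h3, rfl⟩
  have hd := det_ne h1 h2 h3 (by norm_num)
  have hd' : ((1 / 275 : ℝ) • (P - R)) 0 * ((1 / 195 : ℝ) • (Q - R)) 1 -
      ((1 / 275 : ℝ) • (P - R)) 1 * ((1 / 195 : ℝ) • (Q - R)) 0 ≠ 0 := by
    intro h0
    apply hd
    simp only [PiLp.smul_apply, smul_eq_mul] at h0
    linarith
  have q1 : dist Q R ^ 2 = 195 ^ 2 := by rw [h1]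
  have q2 : dist P R ^ 2 = 275 ^ 2 := by rw [h2]
  have q3 : dist P Q ^ 2 = 245 ^ 2 := by rw [h3]
  rw [dsq] at q1 q2 q3
  have key : ∀ a b (r : ℝ), 0 ≤ r → NN (a - b) = r ^ 2 →
      dist (gmap R _ _ hd' a) (gmap R _ _ hd' b) = r := by
    intro a b r hr hN
    apply dist_of_dsq hr
    rw [← hN]
    simp only [gmap_apply, PiLp.sub_apply, PiLp.add_apply, PiLp.smul_apply, smul_eq_mul, NN,
      Prod.fst_sub, Prod.snd_sub]
    linear_combination ((a.2 - b.2) ^ 2 / 195 ^ 2 + (a.1 - b.1) * (a.2 - b.2) / (275 * 195)) * q1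
      + ((a.1 - b.1) ^ 2 / 275 ^ 2 + (a.1 - b.1) * (a.2 - b.2) / (275 * 195)) * q2
      - ((a.1 - b.1) * (a.2 - b.2) / (275 * 195)) * q3
  apply tiles_of_til
  have hm := big_til.map (D := IsTriangle 3 5 7) (gmap R _ _ hd') (by
    rintro _ ⟨p, q, r, n1, n2, n3, rfl⟩
    refine ⟨gmap R _ _ hd' p, gmap R _ _ hd' q, gmap R _ _ hd' r, key _ _ _ (by norm_num) ?_,
      key _ _ _ (by norm_num) ?_, key _ _ _ (by norm_num) ?_, ?_⟩
    · rw [n1]; norm_num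
    · rw [n2]; norm_num
    · rw [n3]; norm_num
    · rw [gmap_hull, Set.image_insert_eq, Set.image_insert_eq, Set.image_singleton])
  rw [← big_hull, gmap_hull, Set.image_insert_eq, Set.image_insert_eq, Set.image_singleton] at hm
  have e1 : gmap R _ _ hd' (275, 0) = P := by
    simp [gmap_apply, smul_smul]
  have e2 : gmap R _ _ hd' (0, 195) = Q := by
    simp [gmap_apply, smul_smul]
  have e3 : gmap R _ _ hd' (0, 0) = R := by
    simp [gmap_apply]
  rw [e1, e2, e3] at hm
  exact hm
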